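/- (Sawtooth Lemma, Property 2.) For every t ∈ ℕ and all x, y ≥ 0, (1/4)·∫₀⁴ ∫₀¹ |g_t(β·x + α·2^{t+1}) − g_t(β·y + α·2^{t+1})| dα dβ ≥ (1/6)·min{|x − y|, 2^t}; that is, with α uniform on [0,1] and β uniform on [0,4] independent, E_{α,β}[|g_{t,α,β}(x) − g_{t,α,β}(y)|] ≥ min{|x−y|, 2^t}/6. -/

import Mathlib

open MeasureTheory

/-- The sawtooth function `g_t(x) = 2^t - |x - (⌊x/2^{t+1}⌋·2^{t+1} + 2^t)|`. -/
noncomputable def sawtooth (t : ℕ) (x : ℝ) : ℝ :=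
  2 ^ t - |x - ((⌊x / 2 ^ (t + 1)⌋ : ℝ) * 2 ^ (t + 1) + 2 ^ t)|

/-!
The sawtooth `g_t` is the norm, i.e. the distance to `0`, on the circle of length `p = 2 ^ (t + 1)`.
On any circle `|‖a‖ - ‖b‖| = min ‖a - b‖ ‖a + b‖`. Shifting `a` and `b` by a uniform `z` leaves
`a - b` alone and makes `a + b + 2z` uniform, so the mean of `|‖a + z‖ - ‖b + z‖|` is the mean of
`min ‖a - b‖ ‖w‖` over `w`, which is `d * (p - d) / p` with `d = ‖a - b‖`. It remains to average
this `p`-periodic function of `a - b = β * (x - y)` over `0 ≤ β ≤ b`, that is, over a segment of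
length `r = b * |x - y|`: for `r ≤ p` the integral is an explicit cubic, and for `r ≥ p` the whole
periods cover at least half of the segment and have mean `p / 6`.
-/

section Norm

variable {p : ℝ}

lemma exists_coe_addCircle_eq_and_abs_eq_norm (a : AddCircle p) :
    ∃ x : ℝ, (x : AddCircle p) = a ∧ |x| = ‖a‖ := by
  obtain ⟨x, rfl⟩ := QuotientAddGroup.mk_surjective a
  refine ⟨x - round (p⁻¹ * x) * p, ?_, (AddCircle.norm_eq p).symm⟩
  simp [← zsmul_eq_mul, AddCircle.coe_period]

lemma norm_coe_addCircle_le_abs (x : ℝ) : ‖(x : AddCircle p)‖ ≤ |x| :=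
  QuotientAddGroup.norm_mk_le_norm

lemma abs_abs_sub_abs_eq_min (x y : ℝ) : |(|x| - |y|)| = min |x - y| |x + y| := by
  grind

theorem abs_norm_sub_norm_addCircle (a b : AddCircle p) :
    |‖a‖ - ‖b‖| = min ‖a - b‖ ‖a + b‖ := by
  refine le_antisymm (le_min (abs_norm_sub_norm_le a b) ?_) ?_
  · simpa using abs_norm_sub_norm_le a (-b)
  · obtain ⟨x, rfl, hx⟩ := exists_coe_addCircle_eq_and_abs_eq_norm a
    obtain ⟨y, rfl, hy⟩ := exists_coe_addCircle_eq_and_abs_eq_norm b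
    rw [← hx, ← hy, abs_abs_sub_abs_eq_min]
    exact min_le_min (norm_coe_addCircle_le_abs (x - y)) (norm_coe_addCircle_le_abs (x + y))

lemma norm_coe_addCircle_of_mem_Icc {x : ℝ} (hx : x ∈ Set.Icc 0 p) :
    ‖(x : AddCircle p)‖ = p / 2 - |x - p / 2| := by
  obtain ⟨h0, h1⟩ := hx
  obtain rfl | hp := (h0.trans h1).eq_or_lt
  · simp [le_antisymm h1 h0]
  have hnorm {y : ℝ} (hy : |y| ≤ p / 2) : ‖(y : AddCircle p)‖ = |y| :=
    (AddCircle.norm_coe_eq_abs_iff p hp.ne').2 (by rwa [abs_of_pos hp])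
  rcases le_total x (p / 2) with h | h
  · rw [hnorm (by grind)]
    grind
  · have hcoe : ((x - p : ℝ) : AddCircle p) = x := by simp
    rw [← hcoe, hnorm (by grind)]
    grind

theorem sawtooth_eq_norm (t : ℕ) (x : ℝ) :
    sawtooth t x = ‖(x : AddCircle ((2 : ℝ) ^ (t + 1)))‖ := by
  have hp : (0 : ℝ) < 2 ^ (t + 1) := by positivity
  have hhalf : (2 : ℝ) ^ t = 2 ^ (t + 1) / 2 := by rw [pow_succ]; ring
  rw [sawtooth, hhalf]
  generalize (2 : ℝ) ^ (t + 1) = p at *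
  have hcoe : ((x - ⌊x / p⌋ * p : ℝ) : AddCircle p) = x := by
    simp [← zsmul_eq_mul, AddCircle.coe_period]
  have hmem : x - ⌊x / p⌋ * p ∈ Set.Icc 0 p :=
    ⟨Int.sub_floor_div_mul_nonneg x hp, (Int.sub_floor_div_mul_lt x hp).le⟩
  rw [← hcoe, norm_coe_addCircle_of_mem_Icc hmem, sub_sub]

/-- The mean over `z` of `|‖a + z‖ - ‖z‖|` on the circle of length `p`, in closed form; see
`integral_addCircle_abs_norm_sub_norm`. -/
noncomputable def meanGap (a : AddCircle p) : ℝ :=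
  ‖a‖ * (p - ‖a‖) / p

lemma meanGap_neg (a : AddCircle p) : meanGap (-a) = meanGap a := by
  simp only [meanGap, norm_neg]

lemma continuous_meanGap : Continuous (meanGap : AddCircle p → ℝ) := by
  unfold meanGap
  fun_prop

lemma intervalIntegrable_meanGap (a b : ℝ) :
    IntervalIntegrable (fun u : ℝ => meanGap (u : AddCircle p)) volume a b :=
  (continuous_meanGap.comp (AddCircle.continuous_mk' p)).intervalIntegrable a b

lemma meanGap_coe_of_mem_Icc {x : ℝ} (hx : x ∈ Set.Icc 0 p) :
    meanGap (x : AddCircle p) = x * (p - x) / p := by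
  rw [meanGap, norm_coe_addCircle_of_mem_Icc hx]
  congr 1
  linear_combination -sq_abs (x - p / 2)

end Norm

section CircleMean

variable {p : ℝ} [hp : Fact (0 < p)]

lemma integral_addCircle_two_nsmul_add {f : AddCircle p → ℝ} (hf : Continuous f)
    (c : AddCircle p) : ∫ z, f (2 • z + c) = ∫ z, f z := by
  have h := (AddCircle.ergodic_nsmul_add c one_lt_two).toMeasurePreserving
  rw [← h.map_eq, integral_map h.aemeasurable hf.aestronglyMeasurable, h.map_eq]

lemma integral_addCircle_comp_norm {f : ℝ → ℝ} (hf : Continuous f) :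
    ∫ z : AddCircle p, f ‖z‖ = 2 * ∫ u in (0 : ℝ)..p / 2, f u := by
  have hp0 : 0 < p := hp.out
  calc ∫ z : AddCircle p, f ‖z‖
      = ∫ u in -(p / 2)..p / 2, f |u| := by
        rw [← AddCircle.intervalIntegral_preimage p (-(p / 2)), show -(p / 2) + p = p / 2 by ring]
        refine intervalIntegral.integral_congr fun u hu => ?_
        rw [Set.uIcc_of_le (by linarith)] at hu
        rw [(AddCircle.norm_coe_eq_abs_iff p hp0.ne').2 (by rw [abs_of_pos hp0]; exact abs_le.2 hu)]
    _ = (∫ u in -(p / 2)..0, f |u|) + ∫ u in (0 : ℝ)..p / 2, f |u| :=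
        (intervalIntegral.integral_add_adjacent_intervals
          (Continuous.intervalIntegrable (by fun_prop) _ _)
          (Continuous.intervalIntegrable (by fun_prop) _ _)).symm
    _ = 2 * ∫ u in (0 : ℝ)..p / 2, f |u| := by
        have hneg := intervalIntegral.integral_comp_neg (a := 0) (b := p / 2) fun u => f |u|
        simp only [abs_neg, neg_zero] at hneg
        rw [← hneg, two_mul]
    _ = 2 * ∫ u in (0 : ℝ)..p / 2, f u := by
        congr 1
        refine intervalIntegral.integral_congr fun u hu => ?_
        rw [Set.uIcc_of_le (by positivity)] at hu
        simp only [abs_of_nonneg hu.1]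

lemma intervalIntegral_min_const_id {d b : ℝ} (hd : 0 ≤ d) (hdb : d ≤ b) :
    ∫ u in (0 : ℝ)..b, min d u = d * b - d ^ 2 / 2 := by
  have hcont : Continuous fun u : ℝ => min d u := by fun_prop
  have hleft : ∫ u in (0 : ℝ)..d, min d u = ∫ u in (0 : ℝ)..d, u :=
    intervalIntegral.integral_congr fun u hu => by
      rw [Set.uIcc_of_le hd] at hu
      exact min_eq_right hu.2
  have hright : ∫ u in d..b, min d u = ∫ _ in d..b, d :=
    intervalIntegral.integral_congr fun u hu => by
      rw [Set.uIcc_of_le hdb] at hu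
      exact min_eq_left hu.1
  rw [← intervalIntegral.integral_add_adjacent_intervals (hcont.intervalIntegrable 0 d)
    (hcont.intervalIntegrable d b), hleft, hright, integral_id, intervalIntegral.integral_const,
    smul_eq_mul]
  ring

lemma norm_addCircle_le_half (a : AddCircle p) : ‖a‖ ≤ p / 2 := by
  simpa [abs_of_pos hp.out] using AddCircle.norm_le_half_period p hp.out.ne' (x := a)

theorem integral_addCircle_abs_norm_sub_norm (a b : AddCircle p) :
    ∫ z, |‖a + z‖ - ‖b + z‖| = p * meanGap (a - b) := by
  calc ∫ z, |‖a + z‖ - ‖b + z‖|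
      = ∫ z, min ‖a - b‖ ‖2 • z + (a + b)‖ := by
        congr with z
        rw [abs_norm_sub_norm_addCircle, add_sub_add_right_eq_sub,
          show a + z + (b + z) = 2 • z + (a + b) by abel]
    _ = ∫ w : AddCircle p, min ‖a - b‖ ‖w‖ :=
        integral_addCircle_two_nsmul_add (f := fun w => min ‖a - b‖ ‖w‖) (by fun_prop) (a + b)
    _ = 2 * ∫ u in (0 : ℝ)..p / 2, min ‖a - b‖ u :=
        integral_addCircle_comp_norm (f := fun u => min ‖a - b‖ u) (by fun_prop)
    _ = p * meanGap (a - b) := by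
        rw [intervalIntegral_min_const_id (norm_nonneg _) (norm_addCircle_le_half _), meanGap,
          mul_div_cancel₀ _ hp.out.ne']
        ring

theorem intervalIntegral_addCircle_abs_norm_sub_norm (u v : ℝ) :
    ∫ α in (0 : ℝ)..1, |‖((u + α * p : ℝ) : AddCircle p)‖ - ‖((v + α * p : ℝ) : AddCircle p)‖| =
      meanGap ((u - v : ℝ) : AddCircle p) := by
  have hscale := intervalIntegral.integral_comp_mul_right (a := 0) (b := 1)
    (fun s : ℝ => |‖(u + s : AddCircle p)‖ - ‖(v + s : AddCircle p)‖|) hp.out.ne'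
  have hcircle := AddCircle.intervalIntegral_preimage p 0
    (fun z : AddCircle p => |‖u + z‖ - ‖v + z‖|)
  rw [zero_add] at hcircle
  simp only [AddCircle.coe_add, AddCircle.coe_sub]
  rw [hscale, zero_mul, one_mul, hcircle, integral_addCircle_abs_norm_sub_norm, smul_eq_mul,
    inv_mul_cancel_left₀ hp.out.ne']

end CircleMean

section SegmentMean

variable {p : ℝ} [hp : Fact (0 < p)]

lemma meanGap_nonneg (a : AddCircle p) : 0 ≤ meanGap a := by
  have := norm_addCircle_le_half a
  have := hp.out
  exact div_nonneg (mul_nonneg (norm_nonneg a) (by linarith)) (by linarith)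

lemma integral_meanGap_of_mem_Icc {r : ℝ} (hr : r ∈ Set.Icc 0 p) :
    ∫ u in (0 : ℝ)..r, meanGap (u : AddCircle p) = r ^ 2 / 2 - r ^ 3 / (3 * p) := by
  have hp0 : p ≠ 0 := hp.out.ne'
  have hcongr : ∫ u in (0 : ℝ)..r, meanGap (u : AddCircle p) =
      ∫ u in (0 : ℝ)..r, (u - u ^ 2 / p) :=
    intervalIntegral.integral_congr fun u hu => by
      rw [Set.uIcc_of_le hr.1] at hu
      rw [meanGap_coe_of_mem_Icc ⟨hu.1, hu.2.trans hr.2⟩]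
      field_simp
  rw [hcongr, intervalIntegral.integral_sub (Continuous.intervalIntegrable (by fun_prop) _ _)
    (Continuous.intervalIntegrable (by fun_prop) _ _), intervalIntegral.integral_div, integral_id,
    integral_pow]
  field_simp
  ring

lemma integral_meanGap_natCast_mul (n : ℕ) :
    ∫ u in (0 : ℝ)..n * p, meanGap (u : AddCircle p) = n * (p ^ 2 / 6) := by
  have hperiodic : Function.Periodic (fun u : ℝ => meanGap (u : AddCircle p)) p := fun u => by
    simp only [AddCircle.coe_add_period]
  have hperiods := hperiodic.intervalIntegral_add_zsmul_eq n 0 intervalIntegrable_meanGap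
  have hp0 : p ≠ 0 := hp.out.ne'
  rw [zero_add, zero_add, integral_meanGap_of_mem_Icc ⟨hp.out.le, le_rfl⟩] at hperiods
  simp only [zsmul_eq_mul, Int.cast_natCast] at hperiods
  rw [hperiods]
  field_simp
  ring

theorem mul_min_le_integral_meanGap {r : ℝ} (hr : 0 ≤ r) :
    r * (min r (p / 2) / 6) ≤ ∫ u in (0 : ℝ)..r, meanGap (u : AddCircle p) := by
  have hp0 : 0 < p := hp.out
  rcases le_total r p with hrp | hpr
  · have hcubic : r ^ 3 / (3 * p) ≤ r ^ 2 / 3 := by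
      rw [div_le_div_iff₀ (by positivity) (by positivity)]
      nlinarith [mul_nonneg (sq_nonneg r) (sub_nonneg.2 hrp)]
    rw [integral_meanGap_of_mem_Icc ⟨hr, hrp⟩]
    nlinarith [min_le_left r (p / 2)]
  · set n := ⌊r / p⌋₊
    have hn_le : n * p ≤ r := (le_div_iff₀ hp0).1 (Nat.floor_le (by positivity))
    have hlt_n : r < (n + 1) * p := (div_lt_iff₀ hp0).1 (Nat.lt_floor_add_one _)
    have hn_one : (1 : ℝ) ≤ n := by
      exact_mod_cast Nat.le_floor (by simpa using (one_le_div hp0).2 hpr)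
    have hhalf : r / 2 ≤ n * p := by nlinarith
    calc r * (min r (p / 2) / 6)
        ≤ r * (p / 2 / 6) := by gcongr; exact min_le_right _ _
      _ ≤ n * (p ^ 2 / 6) := by nlinarith [mul_le_mul_of_nonneg_left hhalf hp0.le]
      _ = ∫ u in (0 : ℝ)..n * p, meanGap (u : AddCircle p) :=
          (integral_meanGap_natCast_mul n).symm
      _ ≤ ∫ u in (0 : ℝ)..r, meanGap (u : AddCircle p) :=
          intervalIntegral.integral_mono_interval le_rfl (by positivity) hn_le
            (.of_forall fun u => meanGap_nonneg _) (intervalIntegrable_meanGap 0 r)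

lemma min_le_average_meanGap_mul {b : ℝ} (hb : 0 < b) (h : ℝ) :
    min (b * |h|) (p / 2) / 6 ≤
      (1 / b) * ∫ β in (0 : ℝ)..b, meanGap ((β * h : ℝ) : AddCircle p) := by
  wlog hh : 0 ≤ h generalizing h
  · simpa [meanGap_neg] using this (-h) (by linarith)
  rw [abs_of_nonneg hh]
  obtain rfl | hpos := hh.eq_or_lt
  · simp [meanGap, div_nonpos_iff]
  rw [intervalIntegral.integral_comp_mul_right (fun u : ℝ => meanGap (u : AddCircle p)) hpos.ne',
    zero_mul, smul_eq_mul, ← mul_assoc, one_div, ← mul_inv, inv_mul_eq_div,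
    le_div_iff₀' (by positivity)]
  exact mul_min_le_integral_meanGap (by positivity)

theorem min_le_average_abs_norm_sub_norm {b : ℝ} (hb : 0 < b) (x y : ℝ) :
    min (b * |x - y|) (p / 2) / 6 ≤
      (1 / b) * ∫ β in (0 : ℝ)..b, ∫ α in (0 : ℝ)..1,
        |‖((β * x + α * p : ℝ) : AddCircle p)‖ - ‖((β * y + α * p : ℝ) : AddCircle p)‖| := by
  simp only [intervalIntegral_addCircle_abs_norm_sub_norm, ← mul_sub]
  exact min_le_average_meanGap_mul hb (x - y)

end SegmentMean

theorem sawtooth_expected_gap_general (t : ℕ) (x y : ℝ) {b : ℝ} (hb : 0 < b) :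
    min (b * |x - y|) (2 ^ t) / 6 ≤
      (1 / b) * ∫ β in (0 : ℝ)..b, ∫ α in (0 : ℝ)..1,
        |sawtooth t (β * x + α * 2 ^ (t + 1)) - sawtooth t (β * y + α * 2 ^ (t + 1))| := by
  have : Fact ((0 : ℝ) < 2 ^ (t + 1)) := ⟨by positivity⟩
  have hhalf : (2 : ℝ) ^ t = 2 ^ (t + 1) / 2 := by rw [pow_succ]; ring
  simp only [sawtooth_eq_norm]
  rw [hhalf]
  exact min_le_average_abs_norm_sub_norm hb x y

/-- Sawtooth Lemma, Property 2: with `α` uniform on `[0,1]` and `β` uniform on `[0,4]`,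
independent, `E[|g_{t,α,β}(x) - g_{t,α,β}(y)|] ≥ min(|x-y|, 2^t)/6`. -/
theorem sawtooth_expected_gap (t : ℕ) (x y : ℝ) (hx : 0 ≤ x) (hy : 0 ≤ y) :
    min |x - y| (2 ^ t) / 6 ≤
      (1 / 4) * ∫ β in (0:ℝ)..4, ∫ α in (0:ℝ)..1,
        |sawtooth t (β * x + α * 2 ^ (t + 1)) - sawtooth t (β * y + α * 2 ^ (t + 1))| := by
  refine le_trans ?_ (sawtooth_expected_gap_general t x y four_pos)
  gcongr
  exact le_mul_of_one_le_left (abs_nonneg _) (by norm_num)
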